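/- Let I ⊂ ℝ be an interval containing 0 and let t ↦ B_t be a C¹-smooth (in operator norm) path of bounded self-adjoint operators on H. Assume that for each t ∈ I there are nonempty closed sets ω_t, Ω_t ⊂ ℝ with spectrum(B_t) = ω_t ∪ Ω_t and dist(ω_t, Ω_t) > 0, that the families {ω_t}_{t∈I} and {Ω_t}_{t∈I} are upper semicontinuous on I, and that for each t ∈ I, P_t is the spectral projection of B_t associated with ω_t. Then for all t ∈ I with t ≥ 0: arcsin(‖P_t − P_0‖) ≤ (π/2) ∫_0^t ‖B'_τ‖ / dist(ω_τ, Ω_τ) dτ. -/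

import Mathlib

open ContinuousLinearMap

/-- The spectral projection of a bounded self-adjoint operator `B` associated with a part `ω`
of its spectrum that is separated from the rest: it is obtained by applying the continuous
functional calculus to the indicator function of `ω`. It is the unique orthogonal projection
commuting with `B` such that the spectrum of the restriction of `B` to its range is contained
in `ω` and the spectrum of the restriction of `B` to its kernel is contained in the complement
part. -/
noncomputable def spectralProj {H : Type*} [NormedAddCommGroup H] [InnerProductSpace ℂ H]
    [CompleteSpace H] (B : H →L[ℂ] H) (ω : Set ℝ) : H →L[ℂ] H :=
  cfc (Set.indicator ω (fun _ => (1:ℝ))) B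

/-- The distance `dist(s,t) = inf{|x − y| : x ∈ s, y ∈ t}` between two sets of reals. -/
noncomputable def setDist (s t : Set ℝ) : ℝ :=
  sInf (Set.image2 dist s t)

/-- A family of sets `{ω_t}_{t ∈ I}` is upper semicontinuous on `I` if for every `t ∈ I` and
`ε > 0` there is `δ > 0` such that `sup_{λ ∈ ω_s} dist(λ, ω_t) < ε` (i.e. `ω_s` is contained
in the open `ε`-neighborhood of `ω_t`) whenever `s ∈ I` and `|s − t| < δ`. -/
def UpperSemicontinuousFamilyOn (ω : ℝ → Set ℝ) (I : Set ℝ) : Prop :=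
  ∀ t ∈ I, ∀ ε > (0:ℝ), ∃ δ > (0:ℝ), ∀ s ∈ I, |s - t| < δ →
    ω s ⊆ Metric.thickening ε (ω t)

/-!
If `l > 1`, then `1 / l = ∫ x > 0, tanh (π x / 2) ∫ t > 0, exp (-x t) sin t sin (l t)`, and
replacing `sin t sin (l t)` by `|sin t|` turns the right-hand side into
`∫ x > 0, 1 / (1 + x²) = π / 2`, so `‖∑ aᵢ‖ ≤ π / (2 σ) * sup_t ‖∑ lᵢ exp (i lᵢ t) aᵢ‖` whenever
all `|lᵢ| > σ`. Applied to discretized spectral decompositions of `A` and `B`, the `lᵢ` being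
differences of spectral points, this gives `‖Q P‖ ≤ (π / 2) ‖A - B‖ / δ` for spectral projections
`P` of `A` and `Q` of `B` that belong to parts of the spectra at distance at least `δ`, and so
bounds the difference of two spectral projections. Along a path this controls the upper right Dini
derivative of `arcsin ‖P_t - P_s‖`, because `arcsin ‖P - Q‖` satisfies the triangle inequality,
and the Dini derivative can be integrated.
-/

section BohrFavard
open MeasureTheory Set Filter Topology Real

lemma integrableOn_exp_neg_mul_mul_Ioi {x : ℝ} (hx : 0 < x) {g : ℝ → ℝ} {C : ℝ}
    (hg : Continuous g) (hC : ∀ t, |g t| ≤ C) :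
    IntegrableOn (fun t => exp (-x * t) * g t) (Ioi 0) :=
  (exp_neg_integrableOn_Ioi 0 hx).mul_bdd hg.aestronglyMeasurable (ae_of_all _ hC)

lemma integral_Ioi_exp_neg_mul_cos {x : ℝ} (hx : 0 < x) (a : ℝ) :
    ∫ t in Ioi (0 : ℝ), exp (-x * t) * cos (a * t) = x / (x ^ 2 + a ^ 2) := by
  have hre : (-x + a * Complex.I : ℂ).re < 0 := by simpa using hx
  calc ∫ t in Ioi (0 : ℝ), exp (-x * t) * cos (a * t)
      = ∫ t in Ioi (0 : ℝ), (Complex.exp ((-x + a * Complex.I) * t)).re := by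
        simp [Complex.exp_re]
    _ = (-Complex.exp ((-x + a * Complex.I) * (0 : ℝ)) / (-x + a * Complex.I)).re := by
        rw [← integral_exp_mul_complex_Ioi hre]
        exact integral_re (integrableOn_exp_mul_complex_Ioi hre 0)
    _ = x / (x ^ 2 + a ^ 2) := by
        simp [Complex.div_re, Complex.normSq_apply, sq]

lemma integral_Ioi_exp_neg_mul_sin_mul_sin {x : ℝ} (hx : 0 < x) (l : ℝ) :
    ∫ t in Ioi (0 : ℝ), exp (-x * t) * (sin t * sin (l * t)) =
      (x / (x ^ 2 + (l - 1) ^ 2) - x / (x ^ 2 + (l + 1) ^ 2)) / 2 := by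
  have hint (a : ℝ) : IntegrableOn (fun t => exp (-x * t) * cos (a * t)) (Ioi 0) :=
    integrableOn_exp_neg_mul_mul_Ioi hx (by fun_prop) fun t => Real.abs_cos_le_one _
  have hprod (t : ℝ) : exp (-x * t) * (sin t * sin (l * t)) =
      (exp (-x * t) * cos ((l - 1) * t) - exp (-x * t) * cos ((l + 1) * t)) / 2 := by
    rw [sub_mul, add_mul, Real.cos_sub, Real.cos_add, one_mul]
    ring
  simp_rw [hprod]
  rw [integral_div, integral_sub (hint _) (hint _), integral_Ioi_exp_neg_mul_cos hx,
    integral_Ioi_exp_neg_mul_cos hx]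

lemma integral_exp_neg_mul_sin_zero_pi (x : ℝ) :
    ∫ t in (0 : ℝ)..π, exp (-x * t) * sin t = (1 + exp (-x * π)) / (1 + x ^ 2) := by
  have hderiv (t : ℝ) : HasDerivAt
      (fun t => exp (-x * t) * (-(x * sin t + cos t) / (1 + x ^ 2))) (exp (-x * t) * sin t) t := by
    have hexp := ((hasDerivAt_id' t).const_mul (-x)).exp
    have htrig := (((Real.hasDerivAt_sin t).const_mul x).add (Real.hasDerivAt_cos t)).neg
    refine (hexp.mul (htrig.div_const (1 + x ^ 2))).congr_deriv ?_
    simp only [Pi.add_apply, Pi.neg_apply]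
    field_simp
    ring
  rw [intervalIntegral.integral_eq_sub_of_hasDerivAt (fun t _ => hderiv t)
    (by apply Continuous.intervalIntegrable; fun_prop)]
  simp only [neg_mul, sin_pi, cos_pi, sin_zero, cos_zero, exp_zero, mul_zero, zero_add, neg_neg,
    one_mul]
  ring

-- The tail over `(π, ∞)` is `exp (-x * π)` times the whole integral.
lemma integral_Ioi_exp_neg_mul_abs_sin {x : ℝ} (hx : 0 < x) :
    ∫ t in Ioi (0 : ℝ), exp (-x * t) * |sin t| = 1 / (tanh (π * x / 2) * (1 + x ^ 2)) := by
  have hint : IntegrableOn (fun t => exp (-x * t) * |sin t|) (Ioi 0) :=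
    integrableOn_exp_neg_mul_mul_Ioi hx (by fun_prop) (C := 1) fun t => by
      simpa using Real.abs_sin_le_one t
  have hhead : ∫ t in (0 : ℝ)..π, exp (-x * t) * |sin t| =
      (1 + exp (-x * π)) / (1 + x ^ 2) := by
    rw [← integral_exp_neg_mul_sin_zero_pi]
    refine intervalIntegral.integral_congr fun t ht => ?_
    rw [uIcc_of_le Real.pi_pos.le] at ht
    simp only [abs_of_nonneg (Real.sin_nonneg_of_nonneg_of_le_pi ht.1 ht.2)]
  have htail : ∫ t in Ioi π, exp (-x * t) * |sin t| =
      exp (-x * π) * ∫ t in Ioi (0 : ℝ), exp (-x * t) * |sin t| := by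
    rw [← sub_self π, ← preimage_add_const_Ioi, ← integral_const_mul,
      ← (measurePreserving_add_right volume π).setIntegral_preimage_emb
        (measurableEmbedding_addRight π)]
    simp only [Real.sin_add_pi, abs_neg, mul_add, Real.exp_add]
    congr! 2
    ring
  have hsplit := intervalIntegral.integral_interval_add_Ioi hint
    (hint.mono_set (Ioi_subset_Ioi Real.pi_pos.le))
  rw [hhead, htail] at hsplit
  have hexp : exp (-x * π) < 1 := Real.exp_lt_one_iff.2 (by nlinarith [Real.pi_pos])
  have htanh : tanh (π * x / 2) = (1 - exp (-x * π)) / (1 + exp (-x * π)) := by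
    have : exp (-x * π) = exp (-(π * x / 2)) / exp (π * x / 2) := by
      rw [← Real.exp_sub]
      ring_nf
    rw [Real.tanh_eq, this]
    field_simp
  have : 1 - exp (-x * π) ≠ 0 := by linarith
  rw [htanh, eq_div_iff (by positivity)]
  field_simp at hsplit ⊢
  linarith

lemma summable_div_sq_add_odd_sq (x : ℝ) :
    Summable fun k : ℕ => x / (x ^ 2 + (2 * (k : ℝ) + 1) ^ 2) := by
  have h := ((summable_nat_add_iff 1).2 (Real.summable_one_div_nat_pow.2 one_lt_two)).mul_left |x|
  refine h.of_norm_bounded fun k => ?_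
  rw [norm_div, Real.norm_eq_abs, Real.norm_of_nonneg (by positivity), mul_one_div]
  gcongr
  push_cast
  nlinarith [sq_nonneg x, k.cast_nonneg (α := ℝ)]

lemma half_add_mul_I_mem_integerComplement (x : ℝ) :
    ((1 + x * Complex.I) / 2 : ℂ) ∈ Complex.integerComplement := by
  rintro ⟨n, hn⟩
  have hre : (n : ℝ) = 1 / 2 := by simpa using congrArg Complex.re hn
  have : 2 * n = 1 := by exact_mod_cast (by linarith : (2 * n : ℝ) = 1)
  omega

lemma cot_pi_mul_half_add_mul_I (x : ℝ) :
    Complex.cot (π * ((1 + x * Complex.I) / 2)) = -(tanh (π * x / 2) * Complex.I) := by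
  have h : (π * ((1 + x * Complex.I) / 2) : ℂ) = (π * x / 2 : ℝ) * Complex.I + π / 2 := by
    push_cast
    ring
  rw [h, Complex.cot, Complex.cos_add_pi_div_two, Complex.sin_add_pi_div_two, neg_div,
    ← Complex.tan_eq_sin_div_cos, Complex.tan_mul_I, Complex.ofReal_tanh]

-- The imaginary part of the Mittag-Leffler expansion of `π * cot (π * w)` at `w = (1 + x * I) / 2`.
lemma hasSum_tanh (x : ℝ) :
    HasSum (fun k : ℕ => 4 / π * (x / (x ^ 2 + (2 * (k : ℝ) + 1) ^ 2))) (tanh (π * x / 2)) := by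
  set a : ℕ → ℝ := fun k => x / (x ^ 2 + (2 * (k : ℝ) + 1) ^ 2) with ha
  have hsum : Summable a := summable_div_sq_add_odd_sq x
  set w : ℂ := (1 + x * Complex.I) / 2 with hw
  have hwint : w ∈ Complex.integerComplement := half_add_mul_I_mem_integerComplement x
  have him (m : ℝ) : (1 / (w + m)).im = -2 * (x / (x ^ 2 + (2 * m + 1) ^ 2)) := by
    have hwm : w + m = ((2 * m + 1 : ℝ) + x * Complex.I) / 2 := by rw [hw]; push_cast; ring
    rw [hwm, one_div_div, Complex.div_im]
    simp only [Complex.im_ofNat, Complex.re_ofNat, Complex.normSq_apply, Complex.add_re,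
      Complex.add_im, Complex.re_ofReal_mul, Complex.im_ofReal_mul, Complex.ofReal_re,
      Complex.ofReal_im, Complex.I_re, Complex.I_im]
    ring
  have hterm (k : ℕ) : (cotTerm w k).im = -2 * (a k + a (k + 1)) := by
    have h₁ := him (-(k + 1))
    have h₂ := him (k + 1)
    push_cast at h₁ h₂
    rw [cotTerm, Complex.add_im, sub_eq_add_neg, h₁, h₂, ha]
    push_cast
    ring_nf
  have htsum : ∑' k, (cotTerm w k).im = -2 * (2 * ∑' k, a k - a 0) := by
    simp_rw [hterm]
    rw [tsum_mul_left, hsum.tsum_add ((summable_nat_add_iff 1).2 hsum), hsum.tsum_eq_zero_add]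
    ring
  have hinv : (1 / w).im = -2 * a 0 := by simpa [ha] using him 0
  have hcot : (π * Complex.cot (π * w)).im = -(π * tanh (π * x / 2)) := by
    rw [hw, cot_pi_mul_half_add_mul_I]
    simp [-Complex.ofReal_tanh]
  have hrep : -(π * tanh (π * x / 2)) - -2 * a 0 = -2 * (2 * ∑' k, a k - a 0) := by
    rw [← hcot, ← hinv, ← htsum, ← Complex.im_tsum (summable_cotTerm hwint), ← Complex.sub_im]
    exact congrArg Complex.im (cot_series_rep' hwint)
  have htanh : tanh (π * x / 2) = 4 / π * ∑' k, a k := by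
    rw [div_mul_eq_mul_div, eq_div_iff Real.pi_ne_zero]
    linarith
  rw [htanh]
  exact hsum.hasSum.mul_left (4 / π)

lemma hasDerivAt_arctan_div {c : ℝ} (hc : c ≠ 0) (x : ℝ) :
    HasDerivAt (fun x => arctan (x / c)) (c / (x ^ 2 + c ^ 2)) x := by
  refine ((hasDerivAt_id' x).div_const c).arctan.congr_deriv ?_
  field_simp
  ring

lemma tendsto_arctan_div_atTop {c : ℝ} (hc : 0 < c) :
    Tendsto (fun x => arctan (x / c)) atTop (𝓝 (π / 2)) :=
  (tendsto_nhds_of_tendsto_nhdsWithin tendsto_arctan_atTop).comp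
    (tendsto_id.atTop_div_const hc)

lemma integral_Ioi_sq_div_sq_add_sq_sq {a : ℝ} (ha : 0 < a) :
    ∫ x in Ioi (0 : ℝ), x ^ 2 / ((x ^ 2 + a ^ 2) * (x ^ 2 + a ^ 2)) = π / (4 * a) := by
  have hderiv (x : ℝ) : HasDerivAt (fun x => (arctan (x / a) / a - x / (x ^ 2 + a ^ 2)) / 2)
      (x ^ 2 / ((x ^ 2 + a ^ 2) * (x ^ 2 + a ^ 2))) x := by
    have hden : HasDerivAt (fun x : ℝ => x ^ 2 + a ^ 2) (2 * x) x := by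
      simpa using (hasDerivAt_pow 2 x).add_const (a ^ 2)
    refine ((((hasDerivAt_arctan_div ha.ne' x).div_const a).sub
      ((hasDerivAt_id' x).div hden (by positivity))).div_const 2).congr_deriv ?_
    field_simp
    ring
  have hrat : Tendsto (fun x : ℝ => x / (x ^ 2 + a ^ 2)) atTop (𝓝 0) := by
    refine squeeze_zero' (g := fun x : ℝ => x⁻¹) ?_ ?_ tendsto_inv_atTop_zero
    all_goals filter_upwards [eventually_gt_atTop 0] with x hx
    · positivity
    · rw [div_le_iff₀ (by positivity)]
      field_simp
      nlinarith [sq_nonneg a]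
  rw [integral_Ioi_of_hasDerivAt_of_nonneg' (fun x _ => hderiv x) (fun x _ => by positivity)
    ((((tendsto_arctan_div_atTop ha).div_const a).sub hrat).div_const 2)]
  simp only [zero_div, arctan_zero, sub_zero]
  field_simp
  ring

lemma integral_Ioi_sq_div_sq_add_sq_mul_sq_add_sq {a b : ℝ} (ha : 0 < a) (hb : 0 < b) :
    ∫ x in Ioi (0 : ℝ), x ^ 2 / ((x ^ 2 + a ^ 2) * (x ^ 2 + b ^ 2)) = π / (2 * (a + b)) := by
  rcases eq_or_ne a b with rfl | hab
  · rw [integral_Ioi_sq_div_sq_add_sq_sq ha]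
    ring_nf
  have hne : a ^ 2 - b ^ 2 ≠ 0 := by
    rw [sq_sub_sq]
    exact mul_ne_zero (by positivity) (sub_ne_zero.2 hab)
  have hderiv (x : ℝ) :
      HasDerivAt (fun x => (a * arctan (x / a) - b * arctan (x / b)) / (a ^ 2 - b ^ 2))
        (x ^ 2 / ((x ^ 2 + a ^ 2) * (x ^ 2 + b ^ 2))) x := by
    refine ((((hasDerivAt_arctan_div ha.ne' x).const_mul a).sub
      ((hasDerivAt_arctan_div hb.ne' x).const_mul b)).div_const (a ^ 2 - b ^ 2)).congr_deriv ?_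
    field_simp
    ring
  rw [integral_Ioi_of_hasDerivAt_of_nonneg' (fun x _ => hderiv x) (fun x _ => by positivity)
    ((((tendsto_arctan_div_atTop ha).const_mul a).sub
      ((tendsto_arctan_div_atTop hb).const_mul b)).div_const _)]
  have : a + b ≠ 0 := by positivity
  simp only [zero_div, arctan_zero, mul_zero, sub_zero]
  field_simp
  ring

lemma integrableOn_sq_div_sq_add_sq_mul_sq_add_sq {a b : ℝ} (ha : 0 < a) (hb : 0 < b) :
    IntegrableOn (fun x => x ^ 2 / ((x ^ 2 + a ^ 2) * (x ^ 2 + b ^ 2))) (Ioi 0) :=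
  .of_integral_ne_zero <| by
    rw [integral_Ioi_sq_div_sq_add_sq_mul_sq_add_sq ha hb]
    positivity

lemma hasSum_one_div_sub_one_div {l : ℝ} (hl : 0 < l) :
    HasSum (fun k : ℕ => 1 / (l + 2 * k) - 1 / (l + 2 * (k + 1))) (1 / l) := by
  rw [hasSum_iff_tendsto_nat_of_nonneg fun k => sub_nonneg.2 (by gcongr; linarith)]
  have htop : Tendsto (fun n : ℕ => l + 2 * (n : ℝ)) atTop atTop :=
    tendsto_atTop_add_const_left _ _ (tendsto_natCast_atTop_atTop.const_mul_atTop two_pos)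
  have hpartial (n : ℕ) : ∑ k ∈ Finset.range n, (1 / (l + 2 * k) - 1 / (l + 2 * (k + 1))) =
      1 / l - 1 / (l + 2 * n) := by
    simpa using Finset.sum_range_sub' (fun k : ℕ => 1 / (l + 2 * (k : ℝ))) n
  simp_rw [hpartial]
  simpa using (tendsto_inv_atTop_zero.comp htop).const_sub (1 / l)

lemma integral_tanh_term {l : ℝ} (hl : 1 < l) (k : ℕ) :
    ∫ x in Ioi (0 : ℝ), 4 / π * (x / (x ^ 2 + (2 * (k : ℝ) + 1) ^ 2)) *
        ((x / (x ^ 2 + (l - 1) ^ 2) - x / (x ^ 2 + (l + 1) ^ 2)) / 2) =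
      1 / (l + 2 * k) - 1 / (l + 2 * (k + 1)) := by
  have hl₁ : 0 < l - 1 := sub_pos.2 hl
  have hl₂ : 0 < l + 1 := by linarith
  have hk : 0 < 2 * (k : ℝ) + 1 := by positivity
  have hfrac (x : ℝ) : 4 / π * (x / (x ^ 2 + (2 * (k : ℝ) + 1) ^ 2)) *
      ((x / (x ^ 2 + (l - 1) ^ 2) - x / (x ^ 2 + (l + 1) ^ 2)) / 2) =
      2 / π * (x ^ 2 / ((x ^ 2 + (l - 1) ^ 2) * (x ^ 2 + (2 * (k : ℝ) + 1) ^ 2)) -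
        x ^ 2 / ((x ^ 2 + (l + 1) ^ 2) * (x ^ 2 + (2 * (k : ℝ) + 1) ^ 2))) := by
    field_simp
    ring
  simp_rw [hfrac]
  rw [integral_const_mul, integral_sub (integrableOn_sq_div_sq_add_sq_mul_sq_add_sq hl₁ hk)
      (integrableOn_sq_div_sq_add_sq_mul_sq_add_sq hl₂ hk),
    integral_Ioi_sq_div_sq_add_sq_mul_sq_add_sq hl₁ hk,
    integral_Ioi_sq_div_sq_add_sq_mul_sq_add_sq hl₂ hk]
  have h₁ : l - 1 + (2 * (k : ℝ) + 1) = l + 2 * k := by ring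
  have h₂ : l + 1 + (2 * (k : ℝ) + 1) = l + 2 * (k + 1) := by ring
  rw [h₁, h₂]
  field_simp

lemma integral_tanh_mul_integral_exp_neg_mul_sin_mul_sin {l : ℝ} (hl : 1 < l) :
    ∫ x in Ioi (0 : ℝ), tanh (π * x / 2) * ∫ t in Ioi (0 : ℝ), exp (-x * t) * (sin t * sin (l * t))
      = 1 / l := by
  set F : ℕ → ℝ → ℝ := fun k x => 4 / π * (x / (x ^ 2 + (2 * (k : ℝ) + 1) ^ 2)) *
    ((x / (x ^ 2 + (l - 1) ^ 2) - x / (x ^ 2 + (l + 1) ^ 2)) / 2) with hF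
  have : 0 < l - 1 := sub_pos.2 hl
  have hF_nonneg (k : ℕ) : ∀ x ∈ Ioi (0 : ℝ), 0 ≤ F k x := fun x (hx : 0 < x) => by
    have : x / (x ^ 2 + (l + 1) ^ 2) ≤ x / (x ^ 2 + (l - 1) ^ 2) := by gcongr; linarith
    have : 0 ≤ x / (x ^ 2 + (l - 1) ^ 2) - x / (x ^ 2 + (l + 1) ^ 2) := sub_nonneg.2 this
    positivity
  have hF_int (k : ℕ) : IntegrableOn (F k) (Ioi 0) := .of_integral_ne_zero <| by
    rw [integral_tanh_term hl]
    exact (sub_pos.2 (by gcongr; linarith)).ne'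
  have hF_norm (k : ℕ) : ∫ x in Ioi (0 : ℝ), ‖F k x‖ = 1 / (l + 2 * k) - 1 / (l + 2 * (k + 1)) := by
    rw [← integral_tanh_term hl]
    exact setIntegral_congr_fun measurableSet_Ioi fun x hx => Real.norm_of_nonneg (hF_nonneg k x hx)
  have htel := hasSum_one_div_sub_one_div (zero_lt_one.trans hl)
  have hsum := hasSum_integral_of_summable_integral_norm hF_int
    (by simpa only [hF_norm] using htel.summable)
  rw [hF] at hsum
  simp_rw [integral_tanh_term hl] at hsum
  rw [htel.unique hsum]
  refine setIntegral_congr_fun measurableSet_Ioi fun x hx => ?_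
  simp only [integral_Ioi_exp_neg_mul_sin_mul_sin hx]
  exact ((hasSum_tanh x).mul_right _).tsum_eq.symm

variable {ι E : Type*} [NormedAddCommGroup E]

lemma norm_sum_mul_integral_smul_le [NormedSpace ℝ E] [CompleteSpace E] {s : Finset ι} {l : ι → ℝ}
    {a : ι → E} {M x : ℝ} (hx : 0 < x)
    (hM : ∀ t : ℝ, ‖∑ i ∈ s, (l i * sin (l i * t)) • a i‖ ≤ M) :
    ‖∑ i ∈ s, (l i * ∫ t in Ioi (0 : ℝ), exp (-x * t) * (sin t * sin (l i * t))) • a i‖ ≤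
      M * (1 / (tanh (π * x / 2) * (1 + x ^ 2))) := by
  have hint (g : ℝ → ℝ) (hg : Continuous g) (hg₁ : ∀ t, |g t| ≤ 1) :
      IntegrableOn (fun t => exp (-x * t) * g t) (Ioi 0) :=
    integrableOn_exp_neg_mul_mul_Ioi hx hg hg₁
  have hsin (l t : ℝ) : |sin t * sin (l * t)| ≤ 1 := by
    rw [abs_mul]
    exact mul_le_one₀ (Real.abs_sin_le_one _) (abs_nonneg _) (Real.abs_sin_le_one _)
  have hsum : ∑ i ∈ s, (l i * ∫ t in Ioi (0 : ℝ), exp (-x * t) * (sin t * sin (l i * t))) • a i =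
      ∫ t in Ioi (0 : ℝ), (exp (-x * t) * sin t) • ∑ i ∈ s, (l i * sin (l i * t)) • a i := by
    simp_rw [← integral_const_mul, ← integral_smul_const]
    rw [← integral_finsetSum _ fun i _ =>
      ((hint _ (by fun_prop) (hsin (l i))).const_mul (l i)).smul_const (a i)]
    refine integral_congr_ae (ae_of_all _ fun t => ?_)
    simp only [Finset.smul_sum, smul_smul]
    exact Finset.sum_congr rfl fun i _ => by ring_nf
  rw [hsum, ← integral_Ioi_exp_neg_mul_abs_sin hx, ← integral_const_mul]
  refine norm_integral_le_of_norm_le ((hint _ (by fun_prop) fun t => ?_).const_mul M)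
    (ae_of_all _ fun t => ?_)
  · simpa using Real.abs_sin_le_one t
  · rw [norm_smul, norm_mul, Real.norm_of_nonneg (Real.exp_pos _).le, Real.norm_eq_abs, mul_comm M]
    gcongr
    exact hM t

lemma norm_sum_le_of_forall_norm_sum_mul_sin_smul_le_of_one_lt [NormedSpace ℝ E] [CompleteSpace E]
    {s : Finset ι} {l : ι → ℝ} {a : ι → E} {M : ℝ} (hl : ∀ i ∈ s, 1 < l i)
    (hM : ∀ t : ℝ, ‖∑ i ∈ s, (l i * sin (l i * t)) • a i‖ ≤ M) :
    ‖∑ i ∈ s, a i‖ ≤ π / 2 * M := by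
  set S : ℝ → ℝ → ℝ := fun x l => ∫ t in Ioi (0 : ℝ), exp (-x * t) * (sin t * sin (l * t))
  have hS_integral {i} (hi : i ∈ s) : ∫ x in Ioi (0 : ℝ), tanh (π * x / 2) * S x (l i) = 1 / l i :=
    integral_tanh_mul_integral_exp_neg_mul_sin_mul_sin (hl i hi)
  have hpos {i} (hi : i ∈ s) : 0 < l i := zero_lt_one.trans (hl i hi)
  have hsum : ∑ i ∈ s, a i =
      ∫ x in Ioi (0 : ℝ), tanh (π * x / 2) • ∑ i ∈ s, (l i * S x (l i)) • a i := by
    have hint {i} (hi : i ∈ s) : IntegrableOn (fun x => tanh (π * x / 2) * S x (l i)) (Ioi 0) :=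
      .of_integral_ne_zero <| by
        rw [hS_integral hi]
        exact (one_div_pos.2 (hpos hi)).ne'
    calc ∑ i ∈ s, a i
        = ∑ i ∈ s, ∫ x in Ioi (0 : ℝ), (tanh (π * x / 2) * S x (l i)) • (l i • a i) := by
          refine Finset.sum_congr rfl fun i hi => ?_
          rw [integral_smul_const, hS_integral hi, smul_smul, one_div_mul_cancel (hpos hi).ne',
            one_smul]
      _ = ∫ x in Ioi (0 : ℝ), ∑ i ∈ s, (tanh (π * x / 2) * S x (l i)) • (l i • a i) :=
          (integral_finsetSum _ fun i hi => (hint hi).smul_const _).symm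
      _ = _ := by simp only [Finset.smul_sum, smul_smul, mul_assoc, mul_comm (l _)]
  have hpi : π / 2 * M = ∫ x in Ioi (0 : ℝ), M * (1 + x ^ 2)⁻¹ := by
    rw [integral_const_mul, integral_Ioi_inv_one_add_sq]
    simp [mul_comm]
  rw [hsum, hpi]
  refine norm_integral_le_of_norm_le (integrable_inv_one_add_sq.integrableOn.const_mul M)
    ((ae_restrict_iff' measurableSet_Ioi).2 (ae_of_all _ fun x (hx : 0 < x) => ?_))
  have htanh : 0 < tanh (π * x / 2) := by
    rw [Real.tanh_eq_sinh_div_cosh]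
    exact div_pos (Real.sinh_pos_iff.2 (by positivity)) (Real.cosh_pos _)
  calc ‖tanh (π * x / 2) • ∑ i ∈ s, (l i * S x (l i)) • a i‖
      ≤ tanh (π * x / 2) * (M * (1 / (tanh (π * x / 2) * (1 + x ^ 2)))) := by
        rw [norm_smul, Real.norm_of_nonneg htanh.le]
        gcongr
        exact norm_sum_mul_integral_smul_le hx hM
    _ = M * (1 + x ^ 2)⁻¹ := by field_simp

lemma norm_sum_le_of_forall_norm_sum_mul_sin_smul_le [NormedSpace ℝ E] [CompleteSpace E]
    {s : Finset ι} {l : ι → ℝ} {a : ι → E} {M σ : ℝ} (hσ : 0 < σ)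
    (hl : ∀ i ∈ s, a i ≠ 0 → σ < |l i|)
    (hM : ∀ t : ℝ, ‖∑ i ∈ s, (l i * sin (l i * t)) • a i‖ ≤ M) :
    ‖∑ i ∈ s, a i‖ ≤ π / 2 * (M / σ) := by
  classical
  rw [← Finset.sum_filter_ne_zero s]
  refine norm_sum_le_of_forall_norm_sum_mul_sin_smul_le_of_one_lt (l := fun i => |l i| / σ)
    (fun i hi => ?_) fun t => ?_
  · rw [Finset.mem_filter] at hi
    exact (one_lt_div hσ).2 (hl i hi.1 hi.2)
  · have hterm (i : ι) : (|l i| / σ * sin (|l i| / σ * t)) • a i =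
        σ⁻¹ • (l i * sin (l i * (t / σ))) • a i := by
      have heven : |l i| * sin (|l i| * (t / σ)) = l i * sin (l i * (t / σ)) := by
        rcases abs_choice (l i) with h | h <;> simp [h]
      rw [smul_smul, ← heven]
      ring_nf
    have hfilter : ∑ i ∈ s with a i ≠ 0, (l i * sin (l i * (t / σ))) • a i =
        ∑ i ∈ s, (l i * sin (l i * (t / σ))) • a i :=
      Finset.sum_filter_of_ne fun i _ h => right_ne_zero_of_smul h
    simp_rw [hterm]
    rw [← Finset.smul_sum, hfilter, norm_smul, norm_inv, Real.norm_of_nonneg hσ.le,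
      inv_mul_eq_div]
    gcongr
    exact hM _

lemma norm_sum_le_of_forall_norm_sum_mul_exp_smul_le [NormedSpace ℂ E] [CompleteSpace E]
    {s : Finset ι} {l : ι → ℝ} {a : ι → E} {M σ : ℝ} (hσ : 0 < σ)
    (hl : ∀ i ∈ s, a i ≠ 0 → σ < |l i|)
    (hM : ∀ t : ℝ, ‖∑ i ∈ s, (l i * Complex.exp (l i * t * Complex.I)) • a i‖ ≤ M) :
    ‖∑ i ∈ s, a i‖ ≤ π / 2 * (M / σ) := by
  let : NormedSpace ℝ E := NormedSpace.restrictScalars ℝ ℂ E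
  refine norm_sum_le_of_forall_norm_sum_mul_sin_smul_le hσ hl fun t => ?_
  set g : ℝ → E := fun t => ∑ i ∈ s, (l i * Complex.exp (l i * t * Complex.I)) • a i with hg
  have hsin : ∑ i ∈ s, (l i * sin (l i * t)) • a i = (Complex.I / 2) • (g (-t) - g t) := by
    rw [hg, ← Finset.sum_sub_distrib, Finset.smul_sum]
    refine Finset.sum_congr rfl fun i _ => ?_
    rw [← sub_smul, smul_smul, ← Complex.coe_smul]
    congr 1
    push_cast
    rw [Complex.sin]
    ring_nf
  calc ‖∑ i ∈ s, (l i * sin (l i * t)) • a i‖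
      = 1 / 2 * ‖g (-t) - g t‖ := by rw [hsin, norm_smul]; simp
    _ ≤ 1 / 2 * (‖g (-t)‖ + ‖g t‖) := by gcongr; exact norm_sub_le _ _
    _ ≤ 1 / 2 * (M + M) := by gcongr <;> exact hM _
    _ = M := by ring

end BohrFavard

section SinTheta
open Set Filter Topology

lemma exists_partitionOfUnity_ball {X : Type*} [PseudoMetricSpace X] {K : Set X}
    (hK : IsCompact K) (hKc : IsClosed K) {ε : ℝ} (hε : 0 < ε) :
    ∃ (u : Finset X) (f : PartitionOfUnity u X K),
      (u : Set X) ⊆ K ∧ f.IsSubordinate fun c => Metric.ball (c : X) ε := by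
  obtain ⟨u, huK, hufin, hcover⟩ := hK.finite_cover_balls hε
  lift u to Finset X using hufin
  obtain ⟨f, hf⟩ := PartitionOfUnity.exists_isSubordinate hKc
    (fun c : u => Metric.ball (c : X) ε) (fun c => Metric.isOpen_ball)
    (hcover.trans (iUnion₂_subset fun c hc => subset_iUnion_of_subset ⟨c, hc⟩ subset_rfl))
  exact ⟨u, f, huK, hf⟩

variable {A : Type*} [CStarAlgebra A] {a b : A} {ι : Type*}

lemma norm_sum_smul_cfc_le (ha : IsSelfAdjoint a) (u : Finset ι) {f : ι → ℝ → ℝ}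
    (hf : ∀ i, ContinuousOn (f i) (spectrum ℝ a)) {z : ι → ℂ} (hz : ∀ i, ‖z i‖ ≤ 1) {C : ℝ}
    (hC : 0 ≤ C) (hfC : ∀ x ∈ spectrum ℝ a, ∑ i ∈ u, |f i x| ≤ C) :
    ‖∑ i ∈ u, z i • cfc (f i) a‖ ≤ C := by
  have hre : ∀ w ∈ spectrum ℂ a, w.re ∈ spectrum ℝ a := fun w hw => by
    rw [ha.mem_spectrum_eq_re hw] at hw
    exact (spectrum.algebraMap_mem_iff ℂ).1 hw
  have hcont (i : ι) : ContinuousOn (fun w : ℂ => (f i w.re : ℂ)) (spectrum ℂ a) :=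
    Complex.continuous_ofReal.comp_continuousOn
      ((hf i).comp Complex.continuous_re.continuousOn hre)
  have : IsStarNormal a := ha.isStarNormal
  have hsum : ∑ i ∈ u, z i • cfc (f i) a =
      cfc (∑ i ∈ u, fun w : ℂ => z i * (f i w.re : ℂ)) a := by
    rw [cfc_sum (fun i (w : ℂ) => z i * (f i w.re : ℂ)) a u
      fun i _ => continuousOn_const.mul (hcont i)]
    refine Finset.sum_congr rfl fun i _ => ?_
    rw [cfc_real_eq_complex (f i) ha, cfc_const_mul (z i) _ a (hcont i)]
  rw [hsum]
  refine norm_cfc_le hC fun w hw => ?_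
  calc ‖(∑ i ∈ u, fun w : ℂ => z i * (f i w.re : ℂ)) w‖
      ≤ ∑ i ∈ u, ‖z i * (f i w.re : ℂ)‖ := by
        rw [Finset.sum_apply]
        exact norm_sum_le _ _
    _ ≤ ∑ i ∈ u, |f i w.re| := by
        refine Finset.sum_le_sum fun i _ => ?_
        rw [norm_mul, Complex.norm_real, Real.norm_eq_abs]
        exact mul_le_of_le_one_left (abs_nonneg _) (hz i)
    _ ≤ C := hfC _ (hre w hw)

lemma cfc_sub_mul_eq_smul_sub_mul (ha : IsSelfAdjoint a) (c : ℝ) {f : ℝ → ℝ}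
    (hf : ContinuousOn f (spectrum ℝ a)) :
    cfc (fun x => (c - x) * f x) a = (c : ℂ) • cfc f a - a * cfc f a := by
  rw [cfc_mul _ _ a (by fun_prop) hf, cfc_sub _ _ a, cfc_const c a ha, cfc_id' ℝ a, sub_mul,
    Algebra.algebraMap_eq_smul_one, smul_one_mul, Complex.coe_smul]

/-- Elements `F i` that behave like the pieces of a spectral decomposition of `a` into parts
located near the points `c i`: every combination `∑ z i • F i` with `‖z i‖ ≤ 1` is a contraction,
and multiplying it by `a` from either side amounts, up to `ε`, to replacing `z i` by `z i * c i`. -/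
structure IsSpectralMesh [Fintype ι] (a : A) (ε : ℝ) (c : ι → ℝ) (F : ι → A) : Prop where
  norm_sum_smul_le : ∀ z : ι → ℂ, (∀ i, ‖z i‖ ≤ 1) → ‖∑ i, z i • F i‖ ≤ 1
  norm_sum_sub_left_mul_le : ∀ z : ι → ℂ, (∀ i, ‖z i‖ ≤ 1) →
    ‖∑ i, (z i * c i) • F i - a * ∑ i, z i • F i‖ ≤ ε
  norm_sum_sub_mul_right_le : ∀ z : ι → ℂ, (∀ i, ‖z i‖ ≤ 1) →
    ‖∑ i, (z i * c i) • F i - (∑ i, z i • F i) * a‖ ≤ ε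

lemma isSpectralMesh_cfc [Fintype ι] (ha : IsSelfAdjoint a) {ε : ℝ} (hε : 0 ≤ ε) {c : ι → ℝ}
    {f : ι → ℝ → ℝ} (hf : ∀ i, ContinuousOn (f i) (spectrum ℝ a))
    (hf₁ : ∀ x ∈ spectrum ℝ a, ∑ i, |f i x| ≤ 1)
    (hfc : ∀ i, ∀ x ∈ spectrum ℝ a, f i x ≠ 0 → |c i - x| ≤ ε) :
    IsSpectralMesh a ε c fun i => cfc (f i) a := by
  have hcomm (i : ι) : Commute a (cfc (f i) a) := by
    simpa only [cfc_id' ℝ a] using cfc_commute_cfc (fun x => x) (f i) a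
  have hleft (z : ι → ℂ) (hz : ∀ i, ‖z i‖ ≤ 1) :
      ‖∑ i, (z i * c i) • cfc (f i) a - a * ∑ i, z i • cfc (f i) a‖ ≤ ε := by
    have hsum : ∑ i, (z i * c i) • cfc (f i) a - a * ∑ i, z i • cfc (f i) a =
        ∑ i, z i • cfc (fun x => (c i - x) * f i x) a := by
      simp only [cfc_sub_mul_eq_smul_sub_mul ha _ (hf _), smul_sub, smul_smul, mul_smul_comm,
        Finset.mul_sum, Finset.sum_sub_distrib]
    rw [hsum]
    refine norm_sum_smul_cfc_le ha _ (fun i => (by fun_prop : ContinuousOn _ _).mul (hf i)) hz hε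
      fun x hx => ?_
    calc ∑ i, |(c i - x) * f i x| ≤ ∑ i, ε * |f i x| := by
          refine Finset.sum_le_sum fun i _ => ?_
          rw [abs_mul]
          by_cases h : f i x = 0
          · simp [h]
          · gcongr
            exact hfc i x hx h
      _ ≤ ε := by
          rw [← Finset.mul_sum]
          exact mul_le_of_le_one_right hε (hf₁ x hx)
  refine ⟨fun z hz => norm_sum_smul_cfc_le ha _ hf hz zero_le_one hf₁, hleft, fun z hz => ?_⟩
  rw [← (Commute.sum_right _ _ _ fun i _ => (hcomm i).smul_right (z i)).eq]
  exact hleft z hz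

lemma exists_isSpectralMesh_sum_eq_cfc (ha : IsSelfAdjoint a) {s : Set ℝ} (hs : IsClosed s)
    {p : ℝ → ℝ} (hp : ContinuousOn p (spectrum ℝ a)) (hp₁ : ∀ x ∈ spectrum ℝ a, |p x| ≤ 1)
    (hps : ∀ x ∈ spectrum ℝ a \ s, p x = 0) {ε : ℝ} (hε : 0 < ε) :
    ∃ (u : Finset ℝ) (F : u → A), (u : Set ℝ) ⊆ spectrum ℝ a ∩ s ∧
      IsSpectralMesh a ε (fun c : u => (c : ℝ)) F ∧ ∑ c, F c = cfc p a := by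
  have hK : IsCompact (spectrum ℝ a ∩ s) := (spectrum.isCompact a).inter_right hs
  obtain ⟨u, f, hu, hf⟩ := exists_partitionOfUnity_ball hK hK.isClosed hε
  have hcont (c : u) : ContinuousOn (fun x => f c x * p x) (spectrum ℝ a) :=
    (f c).continuous.continuousOn.mul hp
  have hsum : ∀ x ∈ spectrum ℝ a, ∑ c, f c x * p x = p x := fun x hx => by
    by_cases hxs : x ∈ s
    · rw [← Finset.sum_mul, ← finsum_eq_sum_of_fintype, f.sum_eq_one ⟨hx, hxs⟩, one_mul]
    · simp [hps x ⟨hx, hxs⟩]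
  refine ⟨u, fun c => cfc (fun x => f c x * p x) a, hu,
    isSpectralMesh_cfc ha hε.le hcont (fun x hx => ?_) (fun c x _ hne => ?_), ?_⟩
  · have hfp : ∑ c, |f c x * p x| = |∑ c, f c x * p x| := by
      simp_rw [← Finset.sum_mul, abs_mul, abs_of_nonneg (f.nonneg _ _), ← Finset.sum_mul]
      rw [abs_of_nonneg (Finset.sum_nonneg fun c _ => f.nonneg c x)]
    rw [hfp, hsum x hx]
    exact hp₁ x hx
  · have hx : x ∈ Metric.ball (c : ℝ) ε :=
      hf c (subset_tsupport _ (left_ne_zero_of_mul hne))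
    rw [abs_sub_comm]
    exact (Metric.mem_ball.1 hx).le
  · rw [← cfc_sum_univ _ a hcont]
    exact cfc_congr fun x hx => by simpa only [Finset.sum_apply] using hsum x hx

lemma norm_mul_sub_mul_le_of_approx {u v u' v' : A} {ε η : ℝ} (hu : ‖u‖ ≤ 1) (hu' : ‖u'‖ ≤ 1)
    (hv : ‖v - a * u‖ ≤ ε) (hv' : ‖v' - u' * b‖ ≤ η) :
    ‖u' * v - v' * u‖ ≤ ‖a - b‖ + ε + η := by
  have hsplit : u' * v - v' * u = u' * (a - b) * u + u' * (v - a * u) - (v' - u' * b) * u := by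
    noncomm_ring
  have hab : ‖u' * (a - b) * u‖ ≤ ‖a - b‖ :=
    calc ‖u' * (a - b) * u‖ ≤ 1 * ‖a - b‖ * 1 :=
          norm_mul_le_of_le (norm_mul_le_of_le hu' le_rfl) hu
      _ = ‖a - b‖ := by ring
  have hleft : ‖u' * (v - a * u)‖ ≤ ε := by simpa only [one_mul] using norm_mul_le_of_le hu' hv
  have hright : ‖(v' - u' * b) * u‖ ≤ η := by simpa only [mul_one] using norm_mul_le_of_le hv' hu
  rw [hsplit]
  exact norm_sub_le_of_le (norm_add_le_of_le hab hleft) hright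

lemma IsSpectralMesh.norm_sum_sub_mul_exp_smul_mul_le {κ : Type*} [Fintype ι] [Fintype κ]
    {ε η : ℝ} {c : ι → ℝ} {F : ι → A} {d : κ → ℝ} {G : κ → A} (hF : IsSpectralMesh a ε c F)
    (hG : IsSpectralMesh b η d G) (t : ℝ) :
    ‖∑ i : ι × κ, (((c i.1 - d i.2 : ℝ) : ℂ) *
      Complex.exp ((c i.1 - d i.2 : ℝ) * t * Complex.I)) • (G i.2 * F i.1)‖ ≤
        ‖a - b‖ + ε + η := by
  let z : ι → ℂ := fun i => Complex.exp ((c i * t : ℝ) * Complex.I)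
  let w : κ → ℂ := fun k => Complex.exp ((-(d k * t) : ℝ) * Complex.I)
  have hz (i : ι) : ‖z i‖ ≤ 1 := (Complex.norm_exp_ofReal_mul_I _).le
  have hw (k : κ) : ‖w k‖ ≤ 1 := (Complex.norm_exp_ofReal_mul_I _).le
  have hexp (i : ι) (k : κ) :
      Complex.exp ((c i - d k : ℝ) * t * Complex.I) = w k * z i := by
    rw [← Complex.exp_add]
    congr 1
    push_cast
    ring
  have hsum : ∑ i : ι × κ, (((c i.1 - d i.2 : ℝ) : ℂ) *
      Complex.exp ((c i.1 - d i.2 : ℝ) * t * Complex.I)) • (G i.2 * F i.1) =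
        (∑ k, w k • G k) * (∑ i, (z i * c i) • F i) -
          (∑ k, (w k * d k) • G k) * ∑ i, z i • F i := by
    simp only [Finset.sum_mul_sum, smul_mul_smul_comm, ← Finset.sum_sub_distrib, ← sub_smul]
    rw [Fintype.sum_prod_type_right]
    refine Finset.sum_congr rfl fun k _ => Finset.sum_congr rfl fun i _ => ?_
    rw [hexp]
    push_cast
    ring_nf
  rw [hsum]
  exact norm_mul_sub_mul_le_of_approx (hF.norm_sum_smul_le z hz) (hG.norm_sum_smul_le w hw)
    (hF.norm_sum_sub_left_mul_le z hz) (hG.norm_sum_sub_mul_right_le w hw)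

theorem norm_cfc_mul_cfc_le (ha : IsSelfAdjoint a) (hb : IsSelfAdjoint b) {s t : Set ℝ}
    (hs : IsClosed s) (ht : IsClosed t) {p q : ℝ → ℝ} (hp : ContinuousOn p (spectrum ℝ a))
    (hp₁ : ∀ x ∈ spectrum ℝ a, |p x| ≤ 1) (hps : ∀ x ∈ spectrum ℝ a \ s, p x = 0)
    (hq : ContinuousOn q (spectrum ℝ b)) (hq₁ : ∀ x ∈ spectrum ℝ b, |q x| ≤ 1)
    (hqt : ∀ x ∈ spectrum ℝ b \ t, q x = 0) {δ : ℝ} (hδ : 0 < δ)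
    (hst : ∀ x ∈ spectrum ℝ a ∩ s, ∀ y ∈ spectrum ℝ b ∩ t, δ ≤ |x - y|) :
    ‖cfc q b * cfc p a‖ ≤ Real.pi / 2 * (‖a - b‖ / δ) := by
  have hbound : ∀ ε ∈ Ioo 0 δ,
      ‖cfc q b * cfc p a‖ ≤ Real.pi / 2 * ((‖a - b‖ + ε + ε) / (δ - ε)) := fun ε hε => by
    obtain ⟨u, F, hu, hF, hFp⟩ := exists_isSpectralMesh_sum_eq_cfc ha hs hp hp₁ hps hε.1
    obtain ⟨v, G, hv, hG, hGq⟩ := exists_isSpectralMesh_sum_eq_cfc hb ht hq hq₁ hqt hε.1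
    rw [← hFp, ← hGq, Finset.sum_mul_sum, ← Fintype.sum_prod_type_right']
    exact norm_sum_le_of_forall_norm_sum_mul_exp_smul_le (sub_pos.2 hε.2)
      (fun i _ _ => (sub_lt_self δ hε.1).trans_le (hst _ (hu i.1.2) _ (hv i.2.2)))
      (hF.norm_sum_sub_mul_exp_smul_mul_le hG)
  have hcont : ContinuousAt (fun ε => Real.pi / 2 * ((‖a - b‖ + ε + ε) / (δ - ε))) 0 := by
    have hδ₀ : δ - 0 ≠ 0 := by simpa only [sub_zero] using hδ.ne'
    fun_prop (disch := exact hδ₀)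
  simpa only [add_zero, sub_zero] using ge_of_tendsto (tendsto_nhdsWithin_of_tendsto_nhds hcont)
    (mem_of_superset (Ioo_mem_nhdsGT hδ) hbound)

end SinTheta

section AngularMetric
open InnerProductGeometry Submodule Real

section Angle
variable {V : Type*} [NormedAddCommGroup V] [InnerProductSpace ℝ V]

lemma exists_norm_sub_smul_eq_sin_angle_mul_norm (x y : V) :
    ∃ r : ℝ, ‖x - r • y‖ = sin (angle x y) * ‖x‖ := by
  rcases eq_or_ne y 0 with rfl | hy
  · exact ⟨0, by simp⟩
  have hy' : ‖y‖ ≠ 0 := norm_ne_zero_iff.2 hy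
  refine ⟨cos (angle x y) * ‖x‖ / ‖y‖,
    (pow_left_inj₀ (norm_nonneg _) (by positivity [sin_angle_nonneg x y]) two_ne_zero).1 ?_⟩
  have hinner : inner ℝ x y = cos (angle x y) * (‖x‖ * ‖y‖) :=
    (cos_angle_mul_norm_mul_norm x y).symm
  rw [norm_sub_sq_real, inner_smul_right, hinner, norm_smul, mul_pow, mul_pow, sin_sq,
    Real.norm_eq_abs, sq_abs]
  field_simp
  ring

lemma angle_le_arcsin_of_inner_sub_eq_zero {x y : V} (hx : x ≠ 0) (hxy : inner ℝ y (x - y) = 0)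
    {c : ℝ} (hc : ‖x - y‖ ≤ c * ‖x‖) : angle x y ≤ arcsin c := by
  have hne : y ≠ 0 ∨ x - y ≠ 0 := by
    by_contra! h
    exact hx (by simpa [h.1] using h.2)
  have hangle := angle_add_eq_arcsin_of_inner_eq_zero hxy hne
  rw [add_sub_cancel] at hangle
  rw [angle_comm, hangle]
  exact monotone_arcsin ((div_le_iff₀ (norm_pos_iff.2 hx)).2 hc)

end Angle

variable {𝕜 E : Type*} [RCLike 𝕜] [NormedAddCommGroup E] [InnerProductSpace 𝕜 E]
  {U V W : Submodule 𝕜 E} [U.HasOrthogonalProjection] [V.HasOrthogonalProjection]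
  [W.HasOrthogonalProjection]

lemma norm_sub_starProjection_apply_le_norm_sub {y : E} (hy : y ∈ U) (x : E) :
    ‖x - U.starProjection x‖ ≤ ‖x - y‖ := by
  rw [starProjection_minimal]
  exact ciInf_le ⟨0, Set.forall_mem_range.2 fun _ => norm_nonneg _⟩ (⟨y, hy⟩ : U)

lemma norm_starProjection_apply_le_of_mem_orthogonal {c : ℝ} (hc : 0 ≤ c)
    (h : ∀ x ∈ V, ‖x - U.starProjection x‖ ≤ c * ‖x‖) {y : E} (hy : y ∈ Uᗮ) :
    ‖V.starProjection y‖ ≤ c * ‖y‖ := by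
  set z := V.starProjection y with hz
  have hzV : z ∈ V := V.starProjection_apply_mem y
  rcases (norm_nonneg z).eq_or_lt with hz₀ | hz₀
  · exact hz₀ ▸ by positivity
  have hinner : inner 𝕜 z z = inner 𝕜 (z - U.starProjection z) y := by
    nth_rw 2 [hz]
    rw [← inner_starProjection_left_eq_right, starProjection_eq_self_iff.2 hzV, inner_sub_left,
      hy _ (U.starProjection_apply_mem z), sub_zero]
  refine le_of_mul_le_mul_right ?_ hz₀
  calc ‖z‖ * ‖z‖ = ‖inner 𝕜 (z - U.starProjection z) y‖ := by
        rw [← hinner, ← inner_self_re_eq_norm, inner_self_eq_norm_mul_norm]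
    _ ≤ c * ‖z‖ * ‖y‖ := (norm_inner_le_norm _ _).trans (by gcongr; exact h z hzV)
    _ = c * ‖y‖ * ‖z‖ := by ring

lemma norm_starProjection_sub_le {c : ℝ} (hc : 0 ≤ c)
    (hUV : ∀ x ∈ U, ‖x - V.starProjection x‖ ≤ c * ‖x‖)
    (hVU : ∀ x ∈ V, ‖x - U.starProjection x‖ ≤ c * ‖x‖) :
    ‖U.starProjection - V.starProjection‖ ≤ c := by
  refine opNorm_le_bound _ hc fun x => ?_
  set u := U.starProjection x
  have hu : u ∈ U := U.starProjection_apply_mem x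
  have hperp : x - u ∈ Uᗮ := sub_starProjection_mem_orthogonal x
  have hsplit : (U.starProjection - V.starProjection) x =
      (u - V.starProjection u) - V.starProjection (x - u) := by
    rw [map_sub, sub_sub_sub_cancel_right]
    rfl
  have hpyth_image : inner 𝕜 (u - V.starProjection u) (V.starProjection (x - u)) = 0 :=
    starProjection_inner_eq_zero _ _ (V.starProjection_apply_mem _)
  have hpyth : inner 𝕜 u (x - u) = 0 := hperp u hu
  refine pow_le_pow_iff_left₀ (norm_nonneg _) (by positivity) two_ne_zero |>.1 ?_
  calc ‖(U.starProjection - V.starProjection) x‖ ^ 2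
      = ‖u - V.starProjection u‖ ^ 2 + ‖V.starProjection (x - u)‖ ^ 2 := by
        rw [hsplit, @norm_sub_sq 𝕜, hpyth_image]
        simp
    _ ≤ (c * ‖u‖) ^ 2 + (c * ‖x - u‖) ^ 2 := by
        gcongr
        · exact hUV u hu
        · exact norm_starProjection_apply_le_of_mem_orthogonal hc hVU hperp
    _ = (c * ‖u + (x - u)‖) ^ 2 := by
        rw [mul_pow _ ‖u + (x - u)‖, @norm_add_sq 𝕜, hpyth]
        simp only [map_zero]
        ring
    _ = (c * ‖x‖) ^ 2 := by rw [add_sub_cancel]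

section RealAngle
variable [InnerProductSpace ℝ E]

lemma angle_starProjection_le_arcsin (hE : ∀ x y : E, inner ℝ x y = RCLike.re (inner 𝕜 x y))
    {x : E} (hx : x ∈ U) (hx₀ : x ≠ 0) :
    angle x (V.starProjection x) ≤ arcsin ‖U.starProjection - V.starProjection‖ := by
  refine angle_le_arcsin_of_inner_sub_eq_zero hx₀ ?_ ?_
  · rw [hE, ← inner_conj_symm, starProjection_inner_eq_zero _ _ (V.starProjection_apply_mem x),
      map_zero, map_zero]
  · have h := le_opNorm (U.starProjection - V.starProjection) x
    rwa [sub_apply, starProjection_eq_self_iff.2 hx] at h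

end RealAngle

lemma norm_sub_starProjection_apply_le_sin_add
    (h : arcsin ‖U.starProjection - V.starProjection‖ +
      arcsin ‖V.starProjection - W.starProjection‖ < π / 2) {x : E} (hx : x ∈ U) :
    ‖x - W.starProjection x‖ ≤
      sin (arcsin ‖U.starProjection - V.starProjection‖ +
        arcsin ‖V.starProjection - W.starProjection‖) * ‖x‖ := by
  rcases eq_or_ne x 0 with rfl | hx₀
  · simp
  let _ : InnerProductSpace ℝ E := InnerProductSpace.rclikeToReal 𝕜 E
  set y := V.starProjection x
  have hxy : angle x y ≤ arcsin ‖U.starProjection - V.starProjection‖ :=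
    angle_starProjection_le_arcsin (real_inner_eq_re_inner 𝕜) hx hx₀
  have hy₀ : y ≠ 0 := fun hy => by
    rw [hy, angle_zero_right] at hxy
    linarith [arcsin_nonneg.2 (norm_nonneg (V.starProjection - W.starProjection))]
  have hyz : angle y (W.starProjection y) ≤ arcsin ‖V.starProjection - W.starProjection‖ :=
    angle_starProjection_le_arcsin (real_inner_eq_re_inner 𝕜) (V.starProjection_apply_mem x) hy₀
  have hxz := (angle_le_angle_add_angle x y (W.starProjection y)).trans (add_le_add hxy hyz)
  obtain ⟨r, hr⟩ := exists_norm_sub_smul_eq_sin_angle_mul_norm x (W.starProjection y)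
  have hmem : r • W.starProjection y ∈ W := by
    rw [RCLike.real_smul_eq_coe_smul (K := 𝕜)]
    exact W.smul_mem _ (W.starProjection_apply_mem y)
  calc ‖x - W.starProjection x‖ ≤ ‖x - r • W.starProjection y‖ :=
        norm_sub_starProjection_apply_le_norm_sub hmem x
    _ = sin (angle x (W.starProjection y)) * ‖x‖ := hr
    _ ≤ _ := by
        gcongr
        exact sin_le_sin_of_le_of_le_pi_div_two
          ((neg_nonpos.2 pi_div_two_pos.le).trans (angle_nonneg _ _)) h.le hxz

theorem arcsin_norm_starProjection_sub_le_add :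
    arcsin ‖U.starProjection - W.starProjection‖ ≤
      arcsin ‖U.starProjection - V.starProjection‖ +
        arcsin ‖V.starProjection - W.starProjection‖ := by
  rcases le_or_gt (π / 2) (arcsin ‖U.starProjection - V.starProjection‖ +
    arcsin ‖V.starProjection - W.starProjection‖) with h | h
  · exact (arcsin_le_pi_div_two _).trans h
  have hnonneg : 0 ≤ arcsin ‖U.starProjection - V.starProjection‖ +
      arcsin ‖V.starProjection - W.starProjection‖ :=
    add_nonneg (arcsin_nonneg.2 (norm_nonneg _)) (arcsin_nonneg.2 (norm_nonneg _))
  rw [arcsin_le_iff_le_sin' ⟨(neg_nonpos.2 pi_div_two_pos.le).trans hnonneg, h⟩]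
  refine norm_starProjection_sub_le (sin_nonneg_of_nonneg_of_le_pi hnonneg
    (h.le.trans (half_le_self pi_pos.le)))
    (fun x hx => norm_sub_starProjection_apply_le_sin_add h hx) fun x hx => ?_
  rw [add_comm, norm_sub_rev V.starProjection, norm_sub_rev U.starProjection] at h ⊢
  exact norm_sub_starProjection_apply_le_sin_add h hx

end AngularMetric

section StarProjection
open Real

variable {𝕜 E : Type*} [RCLike 𝕜] [NormedAddCommGroup E] [InnerProductSpace 𝕜 E] [CompleteSpace E]
  {P Q R : E →L[𝕜] E}

lemma norm_sub_le_of_norm_one_sub_mul_le (hP : IsStarProjection P) (hQ : IsStarProjection Q)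
    {c : ℝ} (hQP : ‖(1 - Q) * P‖ ≤ c) (hPQ : ‖(1 - P) * Q‖ ≤ c) : ‖P - Q‖ ≤ c := by
  obtain ⟨U, _, rfl⟩ := isStarProjection_iff_eq_starProjection.1 hP
  obtain ⟨V, _, rfl⟩ := isStarProjection_iff_eq_starProjection.1 hQ
  refine norm_starProjection_sub_le ((norm_nonneg _).trans hQP) (fun x hx => ?_) fun x hx => ?_
  · simpa [Submodule.starProjection_eq_self_iff.2 hx] using le_of_opNorm_le _ hQP x
  · simpa [Submodule.starProjection_eq_self_iff.2 hx] using le_of_opNorm_le _ hPQ x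

lemma arcsin_norm_sub_le_add_of_isStarProjection (hP : IsStarProjection P)
    (hQ : IsStarProjection Q) (hR : IsStarProjection R) :
    arcsin ‖P - R‖ ≤ arcsin ‖P - Q‖ + arcsin ‖Q - R‖ := by
  obtain ⟨U, _, rfl⟩ := isStarProjection_iff_eq_starProjection.1 hP
  obtain ⟨V, _, rfl⟩ := isStarProjection_iff_eq_starProjection.1 hQ
  obtain ⟨W, _, rfl⟩ := isStarProjection_iff_eq_starProjection.1 hR
  exact arcsin_norm_starProjection_sub_le_add

end StarProjection

section DiniDerivative
open MeasureTheory Set Filter Topology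

lemma eventually_mul_sub_le_integral_toReal {g : ℝ → EReal} {x b y : ℝ} (hxb : x < b)
    (hg : LowerSemicontinuousWithinAt g (Ioi x) x)
    (hint : IntervalIntegrable (fun t => (g t).toReal) volume x b)
    (htop : ∀ᵐ t ∂volume.restrict (Ioc x b), g t < ⊤) (hy : (y : EReal) < g x) :
    ∀ᶠ z in 𝓝[>] x, y * (z - x) ≤ ∫ t in x..z, (g t).toReal := by
  obtain ⟨c, hxc, hc⟩ := mem_nhdsGT_iff_exists_Ioo_subset.1 (hg y hy)
  filter_upwards [Ioo_mem_nhdsGT (lt_min hxb hxc)] with z ⟨hxz, hz⟩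
  obtain ⟨hzb, hzc⟩ := lt_min_iff.1 hz
  have hle : ∀ᵐ t ∂volume.restrict (Ioo x z), y ≤ (g t).toReal := by
    filter_upwards [ae_restrict_mem measurableSet_Ioo, ae_restrict_of_ae_restrict_of_subset
      (Ioo_subset_Ioc_self.trans (Ioc_subset_Ioc_right hzb.le)) htop] with t htz ht
    have hyt : (y : EReal) < g t := hc ⟨htz.1, htz.2.trans hzc⟩
    exact EReal.toReal_le_toReal hyt.le (EReal.coe_ne_bot y) ht.ne
  have hgz : IntervalIntegrable (fun t => (g t).toReal) volume x z :=
    hint.mono_set (uIcc_subset_uIcc_left (mem_uIcc_of_le hxz.le hzb.le))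
  calc y * (z - x) = ∫ _ in x..z, y := by
        rw [intervalIntegral.integral_const, smul_eq_mul, mul_comm]
    _ ≤ ∫ t in x..z, (g t).toReal :=
        intervalIntegral.integral_mono_ae_restrict hxz.le intervalIntegrable_const hgz
          (by rwa [← restrict_Ioo_eq_restrict_Icc])

lemma sub_le_integral_toReal_of_eventually_sub_le {f : ℝ → ℝ} {g : ℝ → EReal} {a b : ℝ}
    (hab : a ≤ b) (hf : ContinuousOn f (Icc a b)) (hg : LowerSemicontinuous g)
    (hint : IntervalIntegrable (fun t => (g t).toReal) volume a b)
    (htop : ∀ᵐ t ∂volume.restrict (Ioc a b), g t < ⊤)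
    (h : ∀ x ∈ Ico a b, ∃ y : ℝ, (y : EReal) < g x ∧ ∀ᶠ z in 𝓝[>] x, f z - f x ≤ y * (z - x)) :
    f b - f a ≤ ∫ t in a..b, (g t).toReal := by
  set F : ℝ → ℝ := fun z => ∫ t in a..z, (g t).toReal
  have hF : ContinuousOn F (Icc a b) := by
    simpa only [uIcc_of_le hab] using
      intervalIntegral.continuousOn_primitive_interval' hint left_mem_uIcc
  have hint_sub {u v : ℝ} (hu : u ∈ Icc a b) (hv : v ∈ Icc a b) :
      IntervalIntegrable (fun t => (g t).toReal) volume u v :=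
    hint.mono_set (uIcc_subset_uIcc (Icc_subset_uIcc hu) (Icc_subset_uIcc hv))
  have hslope : ∀ x ∈ Ico a b, ∀ r : ℝ, 0 < r → ∃ᶠ z in 𝓝[>] x, slope (f - F) x z < r := by
    intro x hx r hr
    have hxI : x ∈ Icc a b := Ico_subset_Icc_self hx
    obtain ⟨y, hyg, hy⟩ := h x hx
    refine Eventually.frequently ?_
    filter_upwards [hy, Ioo_mem_nhdsGT hx.2, eventually_mul_sub_le_integral_toReal hx.2
      (hg.lowerSemicontinuousWithinAt _ x) (hint_sub hxI (right_mem_Icc.2 hab))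
      (ae_restrict_of_ae_restrict_of_subset (Ioc_subset_Ioc_left hx.1) htop) hyg]
      with z hzf hz hzg
    have hzI : z ∈ Icc a b := ⟨hx.1.trans hz.1.le, hz.2.le⟩
    have hFz : F z - F x = ∫ t in x..z, (g t).toReal :=
      intervalIntegral.integral_interval_sub_left (hint_sub (left_mem_Icc.2 hab) hzI)
        (hint_sub (left_mem_Icc.2 hab) hxI)
    refine lt_of_le_of_lt ?_ hr
    rw [slope_def_field]
    refine div_nonpos_of_nonpos_of_nonneg ?_ (sub_nonneg.2 hz.1.le)
    simp only [Pi.sub_apply]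
    linarith
  have hle := image_le_of_liminf_slope_right_le_deriv_boundary (B := fun _ => f a)
    (B' := fun _ => 0) (hf.sub hF) (by simp [F]) continuousOn_const
    (fun x _ => hasDerivWithinAt_const _ _ _) hslope (right_mem_Icc.2 hab)
  exact sub_le_iff_le_add.2 (sub_le_iff_le_add'.1 (by simpa [F, add_comm] using hle))

theorem sub_le_integral_of_eventually_sub_le {f ψ : ℝ → ℝ} {a b : ℝ} (hab : a ≤ b)
    (hf : ContinuousOn f (Icc a b)) (hψ : IntervalIntegrable ψ volume a b)
    (h : ∀ x ∈ Ico a b, ∀ r > ψ x, ∀ᶠ z in 𝓝[>] x, f z - f x ≤ r * (z - x)) :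
    f b - f a ≤ ∫ x in a..b, ψ x := by
  refine le_of_forall_pos_le_add fun ε hε => ?_
  obtain ⟨g, hψg, hg, hgint, hgtop, hgε⟩ := exists_lt_lowerSemicontinuous_integral_lt ψ hψ.1 hε
  rw [← intervalIntegral.integral_of_le hab, ← intervalIntegral.integral_of_le hab] at hgε
  refine (sub_le_integral_toReal_of_eventually_sub_le hab hf hg
    ((intervalIntegrable_iff_integrableOn_Ioc_of_le hab).2 hgint) hgtop fun x hx => ?_).trans hgε.le
  obtain ⟨y, hxy, hy⟩ := EReal.exists_between_coe_real (hψg x)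
  exact ⟨y, hy, h x hx y (EReal.coe_lt_coe_iff.1 hxy)⟩

end DiniDerivative

section SpectralSplitting
open Set

variable {H : Type*} [NormedAddCommGroup H] [InnerProductSpace ℂ H] [CompleteSpace H]
  {A B : H →L[ℂ] H} {s t s' t' : Set ℝ}

/-- The self-adjoint operator `A` has spectrum `s ∪ t` with `s` and `t` closed and disjoint: the
situation in which `spectralProj A s` and `spectralProj A t` are complementary projections. -/
structure IsSpectralSplitting (A : H →L[ℂ] H) (s t : Set ℝ) : Prop where
  isSelfAdjoint : IsSelfAdjoint A
  isClosed_left : IsClosed s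
  isClosed_right : IsClosed t
  disjoint : Disjoint s t
  spectrum_eq : spectrum ℝ A = s ∪ t

namespace IsSpectralSplitting

lemma symm (h : IsSpectralSplitting A s t) : IsSpectralSplitting A t s :=
  ⟨h.isSelfAdjoint, h.isClosed_right, h.isClosed_left, h.disjoint.symm,
    h.spectrum_eq.trans (union_comm s t)⟩

lemma continuousOn_indicator (h : IsSpectralSplitting A s t) :
    ContinuousOn (s.indicator fun _ => (1 : ℝ)) (spectrum ℝ A) := by
  rw [h.spectrum_eq]
  refine ContinuousOn.union_of_isClosed ?_ ?_ h.isClosed_left h.isClosed_right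
  · exact continuousOn_const.congr fun x hx => indicator_of_mem hx _
  · exact (continuousOn_const (c := (0 : ℝ))).congr fun x hx =>
      indicator_of_notMem (disjoint_right.1 h.disjoint hx) _

lemma isStarProjection_spectralProj (h : IsSpectralSplitting A s t) :
    IsStarProjection (spectralProj A s) := by
  refine ⟨?_, IsSelfAdjoint.cfc⟩
  rw [IsIdempotentElem, spectralProj, ← cfc_mul _ _ A h.continuousOn_indicator
    h.continuousOn_indicator]
  simp only [← indicator_mul, mul_one]

lemma one_sub_spectralProj (h : IsSpectralSplitting A s t) :
    1 - spectralProj A s = spectralProj A t := by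
  have hA := h.isSelfAdjoint
  rw [sub_eq_iff_eq_add', spectralProj, spectralProj, ← cfc_add A _ _ h.continuousOn_indicator
    h.symm.continuousOn_indicator, ← cfc_one ℝ A]
  refine cfc_congr fun x hx => ?_
  rw [h.spectrum_eq] at hx
  exact (indicator_of_mem hx _).symm.trans
    (congrFun (indicator_union_of_disjoint h.disjoint _) x)

lemma norm_spectralProj_mul_spectralProj_le (hA : IsSpectralSplitting A s t)
    (hB : IsSpectralSplitting B s' t') {δ : ℝ} (hδ : 0 < δ)
    (hst : ∀ x ∈ s, ∀ y ∈ t', δ ≤ dist x y) :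
    ‖spectralProj B t' * spectralProj A s‖ ≤ Real.pi / 2 * (‖A - B‖ / δ) := by
  have abs_indicator_le (u : Set ℝ) (x : ℝ) : |u.indicator (fun _ => (1 : ℝ)) x| ≤ 1 :=
    (norm_indicator_le_norm_self (fun _ => (1 : ℝ)) x).trans_eq norm_one
  exact norm_cfc_mul_cfc_le hA.isSelfAdjoint hB.isSelfAdjoint hA.isClosed_left hB.isClosed_right
    hA.continuousOn_indicator (fun x _ => abs_indicator_le s x)
    (fun x hx => indicator_of_notMem hx.2 _)
    hB.symm.continuousOn_indicator (fun x _ => abs_indicator_le t' x)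
    (fun x hx => indicator_of_notMem hx.2 _) hδ fun x hx y hy => hst x hx.2 y hy.2

theorem norm_spectralProj_sub_le (hA : IsSpectralSplitting A s t)
    (hB : IsSpectralSplitting B s' t') {δ : ℝ} (hδ : 0 < δ)
    (hst : ∀ x ∈ s, ∀ y ∈ t', δ ≤ dist x y) (hts : ∀ x ∈ t, ∀ y ∈ s', δ ≤ dist x y) :
    ‖spectralProj A s - spectralProj B s'‖ ≤ Real.pi / 2 * (‖A - B‖ / δ) := by
  refine norm_sub_le_of_norm_one_sub_mul_le hA.isStarProjection_spectralProj
    hB.isStarProjection_spectralProj ?_ ?_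
  · rw [hB.one_sub_spectralProj]
    exact hA.norm_spectralProj_mul_spectralProj_le hB hδ hst
  · rw [hA.one_sub_spectralProj, norm_sub_rev]
    exact hB.norm_spectralProj_mul_spectralProj_le hA hδ fun x hx y hy =>
      (hts y hy x hx).trans_eq (dist_comm y x)

end IsSpectralSplitting

end SpectralSplitting

section SetDist
open Metric

variable {s t : Set ℝ}

lemma setDist_le_dist {x y : ℝ} (hx : x ∈ s) (hy : y ∈ t) : setDist s t ≤ dist x y :=
  csInf_le ⟨0, Set.forall_mem_image2.2 fun _ _ _ _ => dist_nonneg⟩ (Set.mem_image2_of_mem hx hy)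

lemma setDist_comm (s t : Set ℝ) : setDist s t = setDist t s :=
  congrArg sInf (Set.image2_comm dist_comm)

lemma disjoint_of_setDist_pos (h : 0 < setDist s t) : Disjoint s t :=
  Set.disjoint_left.2 fun x hs ht => h.not_ge ((setDist_le_dist hs ht).trans_eq (dist_self x))

lemma setDist_sub_sub_le_dist_of_mem_thickening {ε η x y : ℝ} (hx : x ∈ thickening ε s)
    (hy : y ∈ thickening η t) : setDist s t - ε - η ≤ dist x y := by
  obtain ⟨x', hx', hxx'⟩ := mem_thickening_iff.1 hx
  obtain ⟨y', hy', hyy'⟩ := mem_thickening_iff.1 hy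
  have htri := dist_triangle4 x' x y y'
  rw [dist_comm x' x] at htri
  linarith [setDist_le_dist hx' hy']

end SetDist

section Path
open MeasureTheory Set Filter Topology

lemma UpperSemicontinuousFamilyOn.eventually_subset_thickening {ω : ℝ → Set ℝ} {I : Set ℝ}
    (h : UpperSemicontinuousFamilyOn ω I) {t : ℝ} (ht : t ∈ I) {ε : ℝ} (hε : 0 < ε) :
    ∀ᶠ s in 𝓝[I] t, ω s ⊆ Metric.thickening ε (ω t) := by
  obtain ⟨δ, hδ, hsub⟩ := h t ht ε hε
  filter_upwards [mem_nhdsWithin_of_mem_nhds (Metric.ball_mem_nhds t hδ), self_mem_nhdsWithin]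
    with s hs hsI
  exact hsub s hsI hs

lemma lowerSemicontinuousOn_setDist {ω Ω : ℝ → Set ℝ} {I : Set ℝ}
    (hne : ∀ t ∈ I, (ω t).Nonempty ∧ (Ω t).Nonempty) (hω : UpperSemicontinuousFamilyOn ω I)
    (hΩ : UpperSemicontinuousFamilyOn Ω I) :
    LowerSemicontinuousOn (fun t => setDist (ω t) (Ω t)) I := by
  intro t ht c (hc : c < setDist (ω t) (Ω t))
  have hε : 0 < (setDist (ω t) (Ω t) - c) / 3 := by linarith
  filter_upwards [hω.eventually_subset_thickening ht hε, hΩ.eventually_subset_thickening ht hε,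
    self_mem_nhdsWithin] with s hωs hΩs hs
  refine lt_of_lt_of_le (b := c + (setDist (ω t) (Ω t) - c) / 3) (by linarith) ?_
  refine le_csInf ((hne s hs).1.image2 (hne s hs).2) (forall_mem_image2.2 fun x hx y hy => ?_)
  linarith [setDist_sub_sub_le_dist_of_mem_thickening (hωs hx) (hΩs hy)]

lemma intervalIntegrable_norm_derivWithin_div {E : Type*} [NormedAddCommGroup E] [NormedSpace ℝ E]
    {I : Set ℝ} (hI : I.OrdConnected) {B : ℝ → E} (hB : ContDiffOn ℝ 1 B I) {d : ℝ → ℝ}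
    (hd : LowerSemicontinuousOn d I) (hd₀ : ∀ t ∈ I, 0 < d t) {s t : ℝ} (hs : s ∈ I) (ht : t ∈ I)
    (hst : s ≤ t) : IntervalIntegrable (fun τ => ‖derivWithin B I τ‖ / d τ) volume s t := by
  rcases hst.eq_or_lt with rfl | hlt
  · exact IntervalIntegrable.refl
  have hsub : Icc s t ⊆ I := hI.out hs ht
  have hdiff : UniqueDiffOn ℝ I := uniqueDiffOn_convex hI.convex
    ((nonempty_Ioo.2 hlt).mono (interior_Icc (a := s) (b := t) ▸ interior_mono hsub))
  have hB' : ContinuousOn (fun τ => ‖derivWithin B I τ‖) (Icc s t) :=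
    ((hB.continuousOn_derivWithin hdiff le_rfl).mono hsub).norm
  obtain ⟨m, hm, hmin⟩ := (hd.mono hsub).exists_isMinOn (nonempty_Icc.2 hst) isCompact_Icc
  obtain ⟨K, hK⟩ := isCompact_Icc.bddAbove_image hB'
  rw [intervalIntegrable_iff_integrableOn_Icc_of_le hst]
  have hmeas : AEMeasurable d (volume.restrict (Icc s t)) :=
    aemeasurable_restrict_of_measurable_subtype measurableSet_Icc
      (lowerSemicontinuous_restrict_iff.2 (hd.mono hsub)).measurable
  refine Integrable.of_bound
    ((hB'.aemeasurable measurableSet_Icc).div hmeas).aestronglyMeasurable (K / d m) ?_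
  filter_upwards [ae_restrict_mem measurableSet_Icc] with τ hτ
  have hle : ‖derivWithin B I τ‖ ≤ K := hK (mem_image_of_mem _ hτ)
  have hK₀ : 0 ≤ K := (norm_nonneg _).trans hle
  rw [Real.norm_of_nonneg (div_nonneg (norm_nonneg _) (hd₀ τ (hsub hτ)).le)]
  exact div_le_div₀ hK₀ hle (hd₀ m (hsub hm)) (hmin hτ)

lemma continuousWithinAt_of_eventually_norm_sub_le {E : Type*} [SeminormedAddCommGroup E]
    {f : ℝ → E} {I : Set ℝ} {t r : ℝ} (h : ∀ᶠ z in 𝓝[I] t, ‖f z - f t‖ ≤ r * |z - t|) :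
    ContinuousWithinAt f I t := by
  refine tendsto_iff_norm_sub_tendsto_zero.2
    (squeeze_zero' (.of_forall fun _ => norm_nonneg _) h ?_)
  have hcont : Continuous fun z => r * |z - t| := by fun_prop
  exact (hcont.tendsto' t 0 (by simp)).mono_left nhdsWithin_le_nhds

lemma eventually_arcsin_le_mul {κ : ℝ} (hκ : 1 < κ) : ∀ᶠ x in 𝓝[≥] 0, Real.arcsin x ≤ κ * x := by
  have hderiv : HasDerivAt Real.arcsin 1 0 := by
    simpa using Real.hasDerivAt_arcsin (x := 0) (by norm_num) (by norm_num)
  have hslope := hderiv.hasDerivWithinAt.limsup_norm_slope_le (s := Ici 0) (by rwa [norm_one])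
  filter_upwards [hslope, self_mem_nhdsWithin] with x hx (hx₀ : 0 ≤ x)
  rcases hx₀.eq_or_lt with rfl | hpos
  · simp
  rw [Real.arcsin_zero, sub_zero, sub_zero, Real.norm_of_nonneg hx₀, inv_mul_lt_iff₀ hpos] at hx
  exact (le_abs_self _).trans (hx.le.trans_eq (mul_comm x κ))

lemma eventually_arcsin_norm_sub_le {E : Type*} [SeminormedAddCommGroup E]
    {f : ℝ → E} {I : Set ℝ} {t c : ℝ} (hc : 0 ≤ c)
    (h : ∀ r > c, ∀ᶠ z in 𝓝[I] t, ‖f z - f t‖ ≤ r * |z - t|) {r : ℝ} (hr : c < r) :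
    ∀ᶠ z in 𝓝[I] t, Real.arcsin ‖f z - f t‖ ≤ r * |z - t| := by
  obtain ⟨r', hcr', hr'r⟩ := exists_between hr
  have hr'₀ : 0 < r' := hc.trans_lt hcr'
  have hlim : Tendsto (fun z => ‖f z - f t‖) (𝓝[I] t) (𝓝[≥] 0) :=
    tendsto_nhdsWithin_iff.2 ⟨tendsto_iff_norm_sub_tendsto_zero.1
      (continuousWithinAt_of_eventually_norm_sub_le (h r' hcr')), .of_forall fun _ => norm_nonneg _⟩
  filter_upwards [hlim.eventually (eventually_arcsin_le_mul ((one_lt_div hr'₀).2 hr'r)), h r' hcr']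
    with z harcsin hz
  calc Real.arcsin ‖f z - f t‖ ≤ r / r' * ‖f z - f t‖ := harcsin
    _ ≤ r / r' * (r' * |z - t|) := by
        have := hr'₀.trans hr'r
        gcongr
    _ = r * |z - t| := by field_simp

variable {H : Type*} [NormedAddCommGroup H] [InnerProductSpace ℂ H] [CompleteSpace H]
  {I : Set ℝ} {B : ℝ → H →L[ℂ] H} {ω Ω : ℝ → Set ℝ}

lemma eventually_norm_spectralProj_sub_le (hsplit : ∀ t ∈ I, IsSpectralSplitting (B t) (ω t) (Ω t))
    (hω : UpperSemicontinuousFamilyOn ω I) (hΩ : UpperSemicontinuousFamilyOn Ω I) {t : ℝ}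
    (ht : t ∈ I) (hB : DifferentiableWithinAt ℝ B I t) (hdist : 0 < setDist (ω t) (Ω t)) {r : ℝ}
    (hr : Real.pi / 2 * (‖derivWithin B I t‖ / setDist (ω t) (Ω t)) < r) :
    ∀ᶠ z in 𝓝[I] t,
      ‖spectralProj (B z) (ω z) - spectralProj (B t) (ω t)‖ ≤ r * |z - t| := by
  set d := setDist (ω t) (Ω t) with hd
  set b := ‖derivWithin B I t‖ with hb
  obtain ⟨η, ⟨hηr, hηd⟩, hη⟩ : ∃ η, (Real.pi / 2 * ((b + η) / (d - η - η)) < r ∧ 0 < d - η - η) ∧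
      0 < η := by
    have hcont : ContinuousAt (fun η => Real.pi / 2 * ((b + η) / (d - η - η))) 0 :=
      continuousAt_const.mul
        (ContinuousAt.div (by fun_prop) (by fun_prop) (by simpa using hdist.ne'))
    have hgap : ContinuousAt (fun η => d - η - η) 0 := by fun_prop
    have hev := (hcont.eventually_lt_const (by simpa using hr)).and
      (hgap.eventually_const_lt (by simpa using hdist))
    exact ((hev.filter_mono nhdsWithin_le_nhds).and (self_mem_nhdsWithin (s := Ioi 0))).exists
  filter_upwards [hB.hasDerivWithinAt.limsup_norm_slope_le (lt_add_of_pos_right b hη),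
    hω.eventually_subset_thickening ht hη, hΩ.eventually_subset_thickening ht hη,
    self_mem_nhdsWithin] with z hslope hωz hΩz hz
  have hself (u : Set ℝ) : u ⊆ Metric.thickening η u := Metric.self_subset_thickening hη u
  have hBz : ‖B z - B t‖ ≤ (b + η) * |z - t| := by
    rcases eq_or_ne z t with rfl | hzt
    · simp
    rw [inv_mul_lt_iff₀ (norm_pos_iff.2 (sub_ne_zero.2 hzt)), Real.norm_eq_abs] at hslope
    exact hslope.le.trans_eq (mul_comm _ _)
  calc ‖spectralProj (B z) (ω z) - spectralProj (B t) (ω t)‖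
      ≤ Real.pi / 2 * (‖B z - B t‖ / (d - η - η)) :=
        (hsplit z hz).norm_spectralProj_sub_le (hsplit t ht) hηd
          (fun x hx y hy => setDist_sub_sub_le_dist_of_mem_thickening (hωz hx) (hself _ hy))
          fun x hx y hy => by
            rw [hd, setDist_comm]
            exact setDist_sub_sub_le_dist_of_mem_thickening (hΩz hx) (hself _ hy)
    _ ≤ Real.pi / 2 * ((b + η) * |z - t| / (d - η - η)) := by gcongr
    _ = Real.pi / 2 * ((b + η) / (d - η - η)) * |z - t| := by ring
    _ ≤ r * |z - t| := by gcongr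

end Path

open MeasureTheory Set Filter Topology in
theorem arcsin_norm_spectralProj_sub_le_general {H : Type*} [NormedAddCommGroup H]
    [InnerProductSpace ℂ H] [CompleteSpace H] {I : Set ℝ} (hI : I.OrdConnected)
    {B : ℝ → H →L[ℂ] H} (hBsa : ∀ t ∈ I, IsSelfAdjoint (B t)) (hB : DifferentiableOn ℝ B I)
    {ω Ω : ℝ → Set ℝ} (hcl : ∀ t ∈ I, IsClosed (ω t) ∧ IsClosed (Ω t))
    (hspec : ∀ t ∈ I, spectrum ℝ (B t) = ω t ∪ Ω t)
    (hdist : ∀ t ∈ I, 0 < setDist (ω t) (Ω t)) (hω : UpperSemicontinuousFamilyOn ω I)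
    (hΩ : UpperSemicontinuousFamilyOn Ω I) {s t : ℝ} (hs : s ∈ I) (ht : t ∈ I) (hst : s ≤ t)
    (hint : IntervalIntegrable (fun τ => ‖derivWithin B I τ‖ / setDist (ω τ) (Ω τ)) volume s t) :
    Real.arcsin ‖spectralProj (B t) (ω t) - spectralProj (B s) (ω s)‖ ≤
      Real.pi / 2 * ∫ τ in s..t, ‖derivWithin B I τ‖ / setDist (ω τ) (Ω τ) := by
  have hsplit : ∀ τ ∈ I, IsSpectralSplitting (B τ) (ω τ) (Ω τ) := fun τ hτ =>
    ⟨hBsa τ hτ, (hcl τ hτ).1, (hcl τ hτ).2, disjoint_of_setDist_pos (hdist τ hτ), hspec τ hτ⟩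
  set P : ℝ → H →L[ℂ] H := fun τ => spectralProj (B τ) (ω τ)
  have hP : ∀ τ ∈ I, IsStarProjection (P τ) := fun τ hτ =>
    (hsplit τ hτ).isStarProjection_spectralProj
  have hlip : ∀ τ ∈ I, ∀ r > Real.pi / 2 * (‖derivWithin B I τ‖ / setDist (ω τ) (Ω τ)),
      ∀ᶠ z in 𝓝[I] τ, ‖P z - P τ‖ ≤ r * |z - τ| := fun τ hτ r hr =>
    eventually_norm_spectralProj_sub_le hsplit hω hΩ hτ (hB τ hτ) (hdist τ hτ) hr
  have hcont : ContinuousOn P (Icc s t) := fun τ hτ =>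
    (continuousWithinAt_of_eventually_norm_sub_le
      (hlip τ (hI.out hs ht hτ) _ (lt_add_one _))).mono (hI.out hs ht)
  rw [← intervalIntegral.integral_const_mul]
  have hdini := sub_le_integral_of_eventually_sub_le (f := fun τ => Real.arcsin ‖P τ - P s‖) hst
    (Real.continuous_arcsin.comp_continuousOn (hcont.sub continuousOn_const).norm)
    (hint.const_mul (Real.pi / 2)) fun x hx r hr => ?_
  · simpa using hdini
  have hxI : x ∈ I := hI.out hs ht (Ico_subset_Icc_self hx)
  have hIx : I ∈ 𝓝[>] x := mem_of_superset (Ioo_mem_nhdsGT hx.2)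
    (Ioo_subset_Icc_self.trans (hI.out hxI ht))
  have hd := hdist x hxI
  filter_upwards [nhdsWithin_le_of_mem hIx
    (eventually_arcsin_norm_sub_le (by positivity) (hlip x hxI) hr), self_mem_nhdsWithin, hIx]
    with z hz (hxz : x < z) hzI
  rw [abs_of_pos (sub_pos.2 hxz)] at hz
  linarith [arcsin_norm_sub_le_add_of_isStarProjection (hP z hzI) (hP x hxI) (hP s hs)]

/-- Let `t ↦ B_t` be a `C¹`-smooth path of bounded self-adjoint operators on
an interval `I ∋ 0`, whose spectra split as `ω_t ∪ Ω_t` into nonempty closed sets at positive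
distance, depending upper semicontinuously on `t`, and let `P_t` be the spectral projection of
`B_t` associated with `ω_t`. Then for `0 ≤ t ∈ I`:
`arcsin ‖P_t − P_0‖ ≤ (π/2) ∫_0^t ‖B'_τ‖ / dist(ω_τ, Ω_τ) dτ`. -/
theorem arcsin_norm_spectralProj_sub_le {H : Type*} [NormedAddCommGroup H]
    [InnerProductSpace ℂ H] [CompleteSpace H] [TopologicalSpace.SeparableSpace H]
    (I : Set ℝ) (hI : I.OrdConnected) (h0I : (0:ℝ) ∈ I)
    (B : ℝ → (H →L[ℂ] H)) (hBsa : ∀ t ∈ I, IsSelfAdjoint (B t))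
    (hB : ContDiffOn ℝ 1 B I)
    (ω Ω : ℝ → Set ℝ)
    (hne : ∀ t ∈ I, (ω t).Nonempty ∧ (Ω t).Nonempty)
    (hcl : ∀ t ∈ I, IsClosed (ω t) ∧ IsClosed (Ω t))
    (hspec : ∀ t ∈ I, spectrum ℝ (B t) = ω t ∪ Ω t)
    (hdist : ∀ t ∈ I, 0 < setDist (ω t) (Ω t))
    (huscω : UpperSemicontinuousFamilyOn ω I)
    (huscΩ : UpperSemicontinuousFamilyOn Ω I)
    (P : ℝ → (H →L[ℂ] H)) (hP : ∀ t ∈ I, P t = spectralProj (B t) (ω t)) :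
    ∀ t ∈ I, 0 ≤ t →
      Real.arcsin ‖P t - P 0‖ ≤
        (Real.pi / 2) * ∫ τ in (0:ℝ)..t, ‖derivWithin B I τ‖ / setDist (ω τ) (Ω τ) := by
  intro t ht ht0
  rw [hP t ht, hP 0 h0I]
  exact arcsin_norm_spectralProj_sub_le_general hI hBsa (hB.differentiableOn one_ne_zero) hcl hspec
    hdist huscω huscΩ h0I ht ht0 (intervalIntegrable_norm_derivWithin_div hI hB
      (lowerSemicontinuousOn_setDist hne huscω huscΩ) hdist h0I ht ht0)
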